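/- arXiv:1311.5956 — 2 statements merged into one kernel-verified Lean document; each statement's English description precedes it below -/
import Mathlib

section
/- Let L be a graph Laplacian, g : ℝ → ℝ strictly increasing, and let (x, γ) be a Filippov solution of the protocol ẋ_i = -∑_j L i j g(x_j) with initial value x0. If ξ : Fin n → ℝ is a left null vector of L, i.e., ∑ i, ξ i * L i j = 0 for every j, then the quantity ∑ i, ξ i * x t i is conserved: ∑ i, ξ i * x t i = ∑ i, ξ i * x0 i for all t ≥ 0. -/
open MeasureTheory Function

/-!
The velocity `-(L *ᵥ γ s)` lies in the range of `L`, on which pairing with a left null vector of `L`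
vanishes identically. Local integrability of `γ` lets this pairing pass under the integral, so the
displacement `x t - x0` pairs to zero with that vector as well.
-/

section LeftNullVector

open Matrix

variable {ι κ 𝕜 : Type*} [Fintype κ] [RCLike 𝕜] {μ : Measure ℝ} {a b : ℝ}

theorem intervalIntegrable_apply_of_locallyIntegrableOn_Ici {E : Type*}
    [NormedAddCommGroup E] {γ : ℝ → κ → E}
    (hγ : LocallyIntegrableOn γ (Set.Ici a) μ) (hab : a ≤ b) (j : κ) :
    IntervalIntegrable (γ · j) μ a b := by
  have hγ_Icc : IntegrableOn γ (Set.Icc a b) μ :=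
    hγ.integrableOn_compact_subset Set.Icc_subset_Ici_self isCompact_Icc
  have hγ_Ioc : IntegrableOn γ (Set.Ioc a b) μ := hγ_Icc.mono_set Set.Ioc_subset_Icc_self
  exact (intervalIntegrable_iff_integrableOn_Ioc_of_le hab).2 (Integrable.eval hγ_Ioc j)

theorem intervalIntegrable_mulVec_apply (L : Matrix ι κ 𝕜) {γ : ℝ → κ → 𝕜}
    (hγ : ∀ j, IntervalIntegrable (γ · j) μ a b) (i : ι) :
    IntervalIntegrable (fun s => (L *ᵥ γ s) i) μ a b := by
  simpa only [mulVec, dotProduct, Finset.sum_fn] using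
    IntervalIntegrable.sum Finset.univ fun j _ => (hγ j).const_mul (L i j)

variable [Fintype ι]

theorem dotProduct_mulVec_eq_zero_of_vecMul_eq_zero {R : Type*} [NonUnitalSemiring R]
    {L : Matrix ι κ R} {ξ : ι → R} (hξ : ξ ᵥ* L = 0) (v : κ → R) : ξ ⬝ᵥ (L *ᵥ v) = 0 := by
  rw [dotProduct_mulVec, hξ, zero_dotProduct]

theorem dotProduct_intervalIntegral (ξ : ι → 𝕜) {v : ℝ → ι → 𝕜}
    (hv : ∀ i, IntervalIntegrable (v · i) μ a b) :
    (ξ ⬝ᵥ fun i => ∫ s in a..b, v s i ∂μ) = ∫ s in a..b, ξ ⬝ᵥ v s ∂μ := by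
  simp only [dotProduct]
  rw [intervalIntegral.integral_finsetSum fun i _ => (hv i).const_mul (ξ i)]
  simp only [intervalIntegral.integral_const_mul]

theorem dotProduct_intervalIntegral_mulVec_eq_zero {L : Matrix ι κ 𝕜} {ξ : ι → 𝕜}
    (hξ : ξ ᵥ* L = 0) {γ : ℝ → κ → 𝕜} (hγ : ∀ j, IntervalIntegrable (γ · j) μ a b) :
    (ξ ⬝ᵥ fun i => ∫ s in a..b, (L *ᵥ γ s) i ∂μ) = 0 := by
  rw [dotProduct_intervalIntegral ξ (intervalIntegrable_mulVec_apply L hγ)]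
  simp only [dotProduct_mulVec_eq_zero_of_vecMul_eq_zero hξ, intervalIntegral.integral_zero]

theorem filippov_solution_conserved_quantity_general
    {L : Matrix ι κ 𝕜} {x0 : ι → 𝕜} {x : ℝ → ι → 𝕜} {γ : ℝ → κ → 𝕜}
    (hγ : LocallyIntegrableOn γ (Set.Ici a) μ)
    (hsol : ∀ t, a ≤ t → ∀ i, x t i = x0 i - ∫ s in a..t, (L *ᵥ γ s) i ∂μ)
    {ξ : ι → 𝕜} (hξ : ξ ᵥ* L = 0) :
    ∀ t, a ≤ t → ξ ⬝ᵥ x t = ξ ⬝ᵥ x0 := by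
  intro t ht
  have hx : x t = x0 - fun i => ∫ s in a..t, (L *ᵥ γ s) i ∂μ := funext (hsol t ht)
  have hdisplacement : (ξ ⬝ᵥ fun i => ∫ s in a..t, (L *ᵥ γ s) i ∂μ) = 0 :=
    dotProduct_intervalIntegral_mulVec_eq_zero hξ
      (intervalIntegrable_apply_of_locallyIntegrableOn_Ici hγ ht)
  rw [hx, dotProduct_sub, hdisplacement, sub_zero]

end LeftNullVector

/-- For any Filippov solution `(x, γ)` of `ẋ_i = -∑_j L i j g(x_j)` with
initial value `x0`, if `ξ` is a left null vector of `L`, then `∑ i, ξ i * x t i` is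
conserved. -/
theorem filippov_solution_conserved_quantity
    (n : ℕ) (L : Matrix (Fin n) (Fin n) ℝ)
    (hL1 : ∀ i j, i ≠ j → L i j ≤ 0) (hL2 : ∀ i, ∑ j, L i j = 0)
    (g : ℝ → ℝ) (hg : StrictMono g)
    (x0 : Fin n → ℝ) (x γ : ℝ → Fin n → ℝ)
    (hxcont : Continuous x) (hγmeas : Measurable γ)
    (hγint : LocallyIntegrable γ volume)
    (hγK : ∀ᵐ t ∂volume, 0 ≤ t →
      ∀ j, γ t j ∈ Set.Icc (leftLim g (x t j)) (rightLim g (x t j)))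
    (hsol : ∀ t, 0 ≤ t → ∀ i,
      x t i = x0 i - ∫ s in (0:ℝ)..t, ∑ j, L i j * γ s j)
    (ξ : Fin n → ℝ) (hξ : ∀ j, ∑ i, ξ i * L i j = 0) :
    ∀ t, 0 ≤ t → ∑ i, ξ i * x t i = ∑ i, ξ i * x0 i := by
  exact filippov_solution_conserved_quantity_general (hγint.locallyIntegrableOn _) hsol (funext hξ)
end

section
/- (Finite-time convergence part of Theorem 1.) Let L be a graph Laplacian such that G(L) is strongly connected, and let ξ : Fin n → ℝ satisfy ξ i > 0 for all i, ∑ i, ξ i = 1, and ∑ i, ξ i * L i j = 0 for every j. Let g : ℝ → ℝ be strictly increasing with only finitely many discontinuity points in every bounded interval. Let x0 : Fin n → ℝ, set x̄ = ∑ i, ξ i * x0 i, and suppose g is discontinuous at x̄, i.e., leftLim g x̄ < rightLim g x̄. Then every Filippov solution (x, γ) of the protocol ẋ_i = -∑_j L i j g(x_j) with initial value x0 reaches consensus in finite time: there exists T ≥ 0 such that x t i = x̄ for all t ≥ T and all i. -/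
open MeasureTheory Function Filter

/-!
For `m = ∑ i, ξ i * x0 i`, consider the convex energy `V y = ∑ i, ξ i * ∫ s in m..y i, g s`.
The mean `∑ i, ξ i * x t i` is conserved, and among the vectors of mean `m` the energy has a sharp
minimum, with value `0`, at the consensus vector, because `g` jumps at `m`. Since `γ t i` is a
subgradient of the `i`-th summand at `x t i`, the chain rule gives
`d/dt V (x t) = -∑ i, ξ i * γ t i * (L *ᵥ γ t) i`, and for a Laplacian the right-hand side is
`-1/2` times a weighted sum of the squares `(γ t i - γ t j) ^ 2` over the edges of the graph.
Away from consensus some `x t i` lies below `m` and some `x t j` above it, so `γ t j - γ t i` is at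
least the jump of `g` at `m`; by strong connectedness the energy then decreases at a rate bounded
away from zero, hence vanishes after a finite time.
-/

section AbsoluteContinuity

variable {X Y F ι : Type*} [PseudoMetricSpace X] [PseudoMetricSpace Y] [SeminormedAddCommGroup F]

lemma absolutelyContinuousOnInterval_of_dist_le_mul {f : ℝ → X} {h : ℝ → Y} {a b K : ℝ}
    (hf : AbsolutelyContinuousOnInterval f a b)
    (hle : ∀ u ∈ Set.uIcc a b, ∀ v ∈ Set.uIcc a b, dist (h u) (h v) ≤ K * dist (f u) (f v)) :
    AbsolutelyContinuousOnInterval h a b := by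
  have hlim := Tendsto.const_mul K hf
  rw [mul_zero] at hlim
  refine squeeze_zero' (.of_forall fun _ ↦ Finset.sum_nonneg fun _ _ ↦ dist_nonneg) ?_ hlim
  filter_upwards [mem_inf_of_right (mem_principal_self _)] with E hE
  rw [Finset.mul_sum]
  exact Finset.sum_le_sum fun i hi ↦ hle _ (hE.1 i hi).1 _ (hE.1 i hi).2

lemma absolutelyContinuousOnInterval_finsetSum {f : ι → ℝ → F} {a b : ℝ} (s : Finset ι)
    (hf : ∀ i ∈ s, AbsolutelyContinuousOnInterval (f i) a b) :
    AbsolutelyContinuousOnInterval (∑ i ∈ s, f i) a b :=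
  Finset.sum_induction f (AbsolutelyContinuousOnInterval · a b) (fun _ _ ↦ .add)
    (LipschitzWith.const (0 : F)).lipschitzOnWith.absolutelyContinuousOnInterval hf

lemma sub_le_mul_of_deriv_le {f : ℝ → ℝ} {a b c : ℝ} (hab : a ≤ b)
    (hf : AbsolutelyContinuousOnInterval f a b)
    (hderiv : ∀ᵐ t, t ∈ Set.Ioo a b → deriv f t ≤ c) : f b - f a ≤ c * (b - a) := by
  have hle : deriv f ≤ᵐ[volume.restrict (Set.Icc a b)] fun _ ↦ c := by
    rw [← Measure.restrict_congr_set Ioo_ae_eq_Icc, EventuallyLE,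
      ae_restrict_iff' measurableSet_Ioo]
    exact hderiv
  calc
    f b - f a = ∫ t in a..b, deriv f t := hf.integral_deriv_eq_sub.symm
    _ ≤ ∫ _ in a..b, c := intervalIntegral.integral_mono_ae_restrict hab
      hf.intervalIntegrable_deriv intervalIntegrable_const hle
    _ = c * (b - a) := by rw [intervalIntegral.integral_const, smul_eq_mul, mul_comm]

lemma eq_zero_of_deriv_le_neg_of_pos {V : ℝ → ℝ} {k T : ℝ} (hk : 0 ≤ k) (hT : 0 ≤ T)
    (hV : AbsolutelyContinuousOnInterval V 0 T) (hV0 : ∀ t ∈ Set.Icc 0 T, 0 ≤ V t)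
    (hderiv : ∀ᵐ t, t ∈ Set.Ioo 0 T → 0 < V t → deriv V t ≤ -k) (hkT : V 0 ≤ k * T) :
    V T = 0 := by
  by_contra hne
  have hVT : 0 < V T := (hV0 T ⟨hT, le_rfl⟩).lt_of_ne' hne
  -- At a zero of `V` the derivative vanishes, as `V` has a minimum there.
  have hnonpos : ∀ᵐ t, t ∈ Set.Ioo 0 T → deriv V t ≤ 0 := by
    filter_upwards [hderiv] with t ht htT
    rcases (hV0 t (Set.Ioo_subset_Icc_self htT)).eq_or_lt with hzero | hpos
    · have hmin : IsLocalMin V t := by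
        filter_upwards [Icc_mem_nhds htT.1 htT.2] with s hs
        exact hzero ▸ hV0 s hs
      exact hmin.deriv_eq_zero.le
    · exact (ht htT hpos).trans (neg_nonpos.2 hk)
  have hpos : ∀ t ∈ Set.Icc 0 T, 0 < V t := fun t ht ↦ by
    have hmono := sub_le_mul_of_deriv_le ht.2
      (hV.mono (Set.uIcc_subset_uIcc (Set.mem_uIcc_of_le ht.1 ht.2) Set.right_mem_uIcc))
      (hnonpos.mono fun s hs hst ↦ hs ⟨ht.1.trans_lt hst.1, hst.2⟩)
    linarith
  have hdecay := sub_le_mul_of_deriv_le hT hV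
    (hderiv.mono fun t ht htT ↦ ht htT (hpos t (Set.Ioo_subset_Icc_self htT)))
  linarith

end AbsoluteContinuity

lemma hasDerivAt_comp_of_forall_mul_sub_le {G f : ℝ → ℝ} {f' η t : ℝ} (hf : HasDerivAt f f' t)
    (hG : DifferentiableAt ℝ (fun s ↦ G (f s)) t)
    (hη : ∀ y, η * (y - f t) ≤ G y - G (f t)) :
    HasDerivAt (fun s ↦ G (f s)) (η * f') t := by
  have hmin : IsLocalMin (fun s ↦ G (f s) - η * f s) t :=
    .of_forall fun s ↦ by linarith [hη (f s)]
  have hzero := hmin.hasDerivAt_eq_zero (hG.hasDerivAt.sub (hf.const_mul η))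
  exact sub_eq_zero.1 hzero ▸ hG.hasDerivAt

/-- The Filippov regularization `K[g]` of a monotone function `g : ℝ → ℝ`. -/
def filippovMap (g : ℝ → ℝ) (z : ℝ) : Set ℝ :=
  Set.Icc (leftLim g z) (rightLim g z)

section Primitive

variable {g : ℝ → ℝ}

lemma mul_sub_le_integral_of_mem_filippovMap (hg : Monotone g) {z η : ℝ}
    (hη : η ∈ filippovMap g z) (y : ℝ) : η * (y - z) ≤ ∫ s in z..y, g s := by
  have hconst (a b : ℝ) : ∫ _ in a..b, η = η * (b - a) := by
    rw [intervalIntegral.integral_const, smul_eq_mul, mul_comm]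
  rcases le_total z y with hzy | hyz
  · rw [← hconst]
    exact intervalIntegral.integral_mono_on_of_le_Ioo hzy intervalIntegrable_const
      hg.intervalIntegrable fun s hs ↦ hη.2.trans (hg.rightLim_le hs.1)
  · rw [← hconst, intervalIntegral.integral_symm y z, intervalIntegral.integral_symm y z,
      neg_le_neg_iff]
    exact intervalIntegral.integral_mono_on_of_le_Ioo hyz hg.intervalIntegrable
      intervalIntegrable_const fun s hs ↦ (hg.le_leftLim hs.2).trans hη.1

lemma midpoint_mul_add_jump_mul_abs_le_integral (hg : Monotone g) (m y : ℝ) :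
    (leftLim g m + rightLim g m) / 2 * (y - m) + (rightLim g m - leftLim g m) / 2 * |y - m| ≤
      ∫ s in m..y, g s := by
  have hlr : leftLim g m ≤ rightLim g m := hg.leftLim_le_rightLim le_rfl
  rcases le_total m y with hmy | hym
  · rw [abs_of_nonneg (sub_nonneg.2 hmy)]
    linarith [mul_sub_le_integral_of_mem_filippovMap hg (Set.right_mem_Icc.2 hlr) y]
  · rw [abs_of_nonpos (sub_nonpos.2 hym)]
    linarith [mul_sub_le_integral_of_mem_filippovMap hg (Set.left_mem_Icc.2 hlr) y]

lemma dist_integral_le_mul_dist (hg : Monotone g) (m : ℝ) {a b u v : ℝ} (hu : u ∈ Set.Icc a b)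
    (hv : v ∈ Set.Icc a b) :
    dist (∫ s in m..u, g s) (∫ s in m..v, g s) ≤ max |g a| |g b| * dist u v := by
  rw [dist_eq_norm, intervalIntegral.integral_interval_sub_left hg.intervalIntegrable
    hg.intervalIntegrable, Real.dist_eq]
  refine intervalIntegral.norm_integral_le_of_norm_le_const fun s hs ↦ ?_
  have hsab : s ∈ Set.Icc a b := Set.uIcc_subset_Icc hv hu (Set.uIoc_subset_uIcc hs)
  exact abs_le_max_abs_abs (hg hsab.1) (hg hsab.2)

lemma absolutelyContinuousOnInterval_integral_comp (hg : Monotone g) (m : ℝ) {f : ℝ → ℝ} {a b : ℝ}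
    (hf : AbsolutelyContinuousOnInterval f a b) :
    AbsolutelyContinuousOnInterval (fun t ↦ ∫ s in m..f t, g s) a b := by
  obtain ⟨C, hC⟩ := hf.exists_bound
  exact absolutelyContinuousOnInterval_of_dist_le_mul hf fun u hu v hv ↦
    dist_integral_le_mul_dist hg m (abs_le.1 (hC u hu)) (abs_le.1 (hC v hv))

end Primitive

section WeightedMean

variable {ι : Type*} [Fintype ι] {ξ y : ι → ℝ} {m : ℝ}

lemma exists_gt_of_sum_mul_sub_eq_zero (hξ : ∀ i, 0 < ξ i) (hmean : ∑ i, ξ i * (y i - m) = 0)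
    (hne : ∃ i, y i ≠ m) : ∃ i, m < y i := by
  obtain ⟨i, hi⟩ := hne
  obtain ⟨j, -, hj⟩ := Finset.exists_pos_of_sum_zero_of_exists_nonzero _ hmean
    ⟨i, Finset.mem_univ i, mul_ne_zero (hξ i).ne' (sub_ne_zero.2 hi)⟩
  exact ⟨j, sub_pos.1 (pos_of_mul_pos_right hj (hξ j).le)⟩

lemma exists_lt_of_sum_mul_sub_eq_zero (hξ : ∀ i, 0 < ξ i) (hmean : ∑ i, ξ i * (y i - m) = 0)
    (hne : ∃ i, y i ≠ m) : ∃ i, y i < m := by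
  have hmean' : ∑ i, ξ i * (-y i - -m) = 0 := by
    rw [← neg_eq_zero, ← Finset.sum_neg_distrib, ← hmean]
    exact Finset.sum_congr rfl fun i _ ↦ by ring
  obtain ⟨i, hi⟩ := exists_gt_of_sum_mul_sub_eq_zero hξ hmean' (hne.imp fun i ↦ neg_injective.ne)
  exact ⟨i, neg_lt_neg_iff.1 hi⟩

lemma exists_jump_le_sub_of_mem_filippovMap {g : ℝ → ℝ} (hg : Monotone g) (hξ : ∀ i, 0 < ξ i)
    (hmean : ∑ i, ξ i * (y i - m) = 0) (hne : ∃ i, y i ≠ m) {c : ι → ℝ}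
    (hc : ∀ i, c i ∈ filippovMap g (y i)) :
    ∃ i j, rightLim g m - leftLim g m ≤ c i - c j := by
  obtain ⟨i, hi⟩ := exists_gt_of_sum_mul_sub_eq_zero hξ hmean hne
  obtain ⟨j, hj⟩ := exists_lt_of_sum_mul_sub_eq_zero hξ hmean hne
  exact ⟨i, j, sub_le_sub ((hg.rightLim_le_leftLim hi).trans (hc i).1)
    ((hc j).2.trans (hg.rightLim_le_leftLim hj))⟩

end WeightedMean

section Lyapunov

variable {ι : Type*} [Fintype ι] {ξ y : ι → ℝ} {g : ℝ → ℝ} {m : ℝ}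

/-- The Lyapunov function of the protocol. Taking the primitive of `g` that vanishes at the
consensus value `m` makes its minimum over the vectors of weighted mean `m` equal to `0`. -/
noncomputable def lyapunov (ξ : ι → ℝ) (g : ℝ → ℝ) (m : ℝ) (y : ι → ℝ) : ℝ :=
  ∑ i, ξ i * ∫ s in m..y i, g s

lemma jump_mul_sum_abs_le_lyapunov (hg : Monotone g) (hξ : ∀ i, 0 ≤ ξ i)
    (hmean : ∑ i, ξ i * (y i - m) = 0) :
    (rightLim g m - leftLim g m) / 2 * ∑ i, ξ i * |y i - m| ≤ lyapunov ξ g m y := by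
  set p := (leftLim g m + rightLim g m) / 2
  set d := (rightLim g m - leftLim g m) / 2
  calc
    d * ∑ i, ξ i * |y i - m| = p * ∑ i, ξ i * (y i - m) + d * ∑ i, ξ i * |y i - m| := by
      rw [hmean, mul_zero, zero_add]
    _ = ∑ i, ξ i * (p * (y i - m) + d * |y i - m|) := by
      rw [Finset.mul_sum, Finset.mul_sum, ← Finset.sum_add_distrib]
      exact Finset.sum_congr rfl fun i _ ↦ by ring
    _ ≤ lyapunov ξ g m y := Finset.sum_le_sum fun i _ ↦ mul_le_mul_of_nonneg_left
      (midpoint_mul_add_jump_mul_abs_le_integral hg m (y i)) (hξ i)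

lemma lyapunov_nonneg (hg : Monotone g) (hξ : ∀ i, 0 ≤ ξ i)
    (hmean : ∑ i, ξ i * (y i - m) = 0) : 0 ≤ lyapunov ξ g m y :=
  (mul_nonneg (div_nonneg (sub_nonneg.2 (hg.leftLim_le_rightLim le_rfl)) zero_le_two)
    (Finset.sum_nonneg fun i _ ↦ mul_nonneg (hξ i) (abs_nonneg _))).trans
    (jump_mul_sum_abs_le_lyapunov hg hξ hmean)

lemma lyapunov_eq_zero_iff (hg : Monotone g) (hm : leftLim g m < rightLim g m)
    (hξ : ∀ i, 0 < ξ i) (hmean : ∑ i, ξ i * (y i - m) = 0) :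
    lyapunov ξ g m y = 0 ↔ ∀ i, y i = m := by
  refine ⟨fun hzero i ↦ ?_, fun hy ↦ by simp [lyapunov, hy]⟩
  have hsum : ∑ i, ξ i * |y i - m| ≤ 0 := by
    refine nonpos_of_mul_nonpos_right ?_ (half_pos (sub_pos.2 hm))
    exact (jump_mul_sum_abs_le_lyapunov hg (fun i ↦ (hξ i).le) hmean).trans hzero.le
  have hterm : ξ i * |y i - m| ≤ 0 :=
    (Finset.single_le_sum (fun j _ ↦ mul_nonneg (hξ j).le (abs_nonneg (y j - m)))
      (Finset.mem_univ i)).trans hsum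
  exact sub_eq_zero.1 (abs_nonpos_iff.1 (nonpos_of_mul_nonpos_right hterm (hξ i)))

end Lyapunov

section Laplacian

open scoped Matrix

variable {ι : Type*} [Fintype ι] {L : Matrix ι ι ℝ} {ξ : ι → ℝ}

/-- Graph Laplacians of weighted directed graphs on `ι`. -/
structure IsGraphLaplacian (L : Matrix ι ι ℝ) : Prop where
  apply_nonpos : ∀ i j, i ≠ j → L i j ≤ 0
  row_sum : ∀ i, ∑ j, L i j = 0

/-- The edges of the graph `G(L)`; the entry `L b a` carries the edge from `a` to `b`. -/
def LaplacianEdge {ι : Type*} (L : Matrix ι ι ℝ) (a b : ι) : Prop :=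
  a ≠ b ∧ L b a < 0

/-- The rate at which the Lyapunov function decreases along the protocol when the velocity is
`-(L *ᵥ c)`. -/
def dissipation (L : Matrix ι ι ℝ) (ξ c : ι → ℝ) : ℝ :=
  ∑ i, ξ i * (c i * (L *ᵥ c) i)

namespace IsGraphLaplacian

lemma two_mul_dissipation (hL : IsGraphLaplacian L) (hξL : ξ ᵥ* L = 0) (c : ι → ℝ) :
    2 * dissipation L ξ c = ∑ i, ∑ j, ξ i * -L i j * (c i - c j) ^ 2 := by
  have hrow : ∑ i, ∑ j, ξ i * c i ^ 2 * L i j = 0 := by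
    simp only [← Finset.mul_sum, hL.row_sum, mul_zero, Finset.sum_const_zero]
  have hcol : ∑ i, ∑ j, ξ i * L i j * c j ^ 2 = 0 := by
    have hcol_sum (j : ι) : ∑ i, ξ i * L i j = 0 := congrFun hξL j
    rw [Finset.sum_comm]
    simp only [← Finset.sum_mul, hcol_sum, zero_mul, Finset.sum_const_zero]
  have hcross : dissipation L ξ c = ∑ i, ∑ j, ξ i * (c i * (L i j * c j)) := by
    simp only [dissipation, Matrix.mulVec, dotProduct, Finset.mul_sum]
  calc
    2 * dissipation L ξ c = 2 * (∑ i, ∑ j, ξ i * (c i * (L i j * c j)))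
        - (∑ i, ∑ j, ξ i * c i ^ 2 * L i j) - ∑ i, ∑ j, ξ i * L i j * c j ^ 2 := by
      rw [hrow, hcol, hcross, sub_zero, sub_zero]
    _ = ∑ i, ∑ j, ξ i * -L i j * (c i - c j) ^ 2 := by
      simp only [Finset.mul_sum, ← Finset.sum_sub_distrib]
      exact Finset.sum_congr rfl fun i _ ↦ Finset.sum_congr rfl fun j _ ↦ by ring

lemma mul_sq_sub_nonneg (hL : IsGraphLaplacian L) (hξ : ∀ i, 0 ≤ ξ i) (c : ι → ℝ) (i j : ι) :
    0 ≤ ξ i * -L i j * (c i - c j) ^ 2 := by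
  rcases eq_or_ne i j with rfl | hij
  · simp
  · exact mul_nonneg (mul_nonneg (hξ i) (neg_nonneg.2 (hL.apply_nonpos i j hij))) (sq_nonneg _)

lemma dissipation_nonneg (hL : IsGraphLaplacian L) (hξ : ∀ i, 0 ≤ ξ i) (hξL : ξ ᵥ* L = 0)
    (c : ι → ℝ) : 0 ≤ dissipation L ξ c := by
  refine nonneg_of_mul_nonneg_right ?_ (zero_lt_two (α := ℝ))
  rw [hL.two_mul_dissipation hξL]
  exact Finset.sum_nonneg fun i _ ↦ Finset.sum_nonneg fun j _ ↦ hL.mul_sq_sub_nonneg hξ c i j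

lemma mul_sq_sub_le_two_mul_dissipation (hL : IsGraphLaplacian L) (hξ : ∀ i, 0 ≤ ξ i)
    (hξL : ξ ᵥ* L = 0) (c : ι → ℝ) (i j : ι) :
    ξ i * -L i j * (c i - c j) ^ 2 ≤ 2 * dissipation L ξ c := by
  rw [hL.two_mul_dissipation hξL]
  calc
    ξ i * -L i j * (c i - c j) ^ 2 ≤ ∑ j, ξ i * -L i j * (c i - c j) ^ 2 :=
      Finset.single_le_sum (fun j _ ↦ hL.mul_sq_sub_nonneg hξ c i j) (Finset.mem_univ j)
    _ ≤ ∑ i, ∑ j, ξ i * -L i j * (c i - c j) ^ 2 :=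
      Finset.single_le_sum (f := fun i ↦ ∑ j, ξ i * -L i j * (c i - c j) ^ 2)
        (fun i _ ↦ Finset.sum_nonneg fun j _ ↦ hL.mul_sq_sub_nonneg hξ c i j) (Finset.mem_univ i)

lemma exists_sq_sub_le_mul_dissipation_of_reflTransGen (hL : IsGraphLaplacian L)
    (hξ : ∀ i, 0 < ξ i) (hξL : ξ ᵥ* L = 0) {u w : ι}
    (huw : Relation.ReflTransGen (LaplacianEdge L) u w) :
    ∃ C : ℝ, ∀ c : ι → ℝ, (c u - c w) ^ 2 ≤ C * dissipation L ξ c := by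
  induction huw with
  | refl => exact ⟨0, fun c ↦ by simp⟩
  | @tail a b _ hab ih =>
    obtain ⟨C, hC⟩ := ih
    have hweight : 0 < ξ b * -L b a := mul_pos (hξ b) (neg_pos.2 hab.2)
    refine ⟨2 * (C + 2 / (ξ b * -L b a)), fun c ↦ ?_⟩
    have hedge : (c a - c b) ^ 2 ≤ 2 / (ξ b * -L b a) * dissipation L ξ c := by
      rw [div_mul_eq_mul_div, le_div_iff₀ hweight, mul_comm, sub_sq_comm]
      exact hL.mul_sq_sub_le_two_mul_dissipation (fun i ↦ (hξ i).le) hξL c b a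
    calc
      (c u - c b) ^ 2 = ((c u - c a) + (c a - c b)) ^ 2 := by rw [sub_add_sub_cancel]
      _ ≤ 2 * ((c u - c a) ^ 2 + (c a - c b) ^ 2) := add_sq_le
      _ ≤ 2 * (C * dissipation L ξ c + 2 / (ξ b * -L b a) * dissipation L ξ c) := by
        gcongr
        exact hC c
      _ = 2 * (C + 2 / (ξ b * -L b a)) * dissipation L ξ c := by ring

lemma exists_forall_sq_sub_le_mul_dissipation (hL : IsGraphLaplacian L) (hξ : ∀ i, 0 < ξ i)
    (hξL : ξ ᵥ* L = 0) (hconn : ∀ u w, Relation.ReflTransGen (LaplacianEdge L) u w) :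
    ∃ C > 0, ∀ (u w : ι) (c : ι → ℝ), (c u - c w) ^ 2 ≤ C * dissipation L ξ c := by
  choose C hC using fun u w ↦
    hL.exists_sq_sub_le_mul_dissipation_of_reflTransGen hξ hξL (hconn u w)
  obtain ⟨B, hB⟩ := (Set.finite_range (uncurry C)).bddAbove
  refine ⟨max B 1, lt_max_of_lt_right one_pos, fun u w c ↦ (hC u w c).trans ?_⟩
  exact mul_le_mul_of_nonneg_right (le_max_of_le_left (hB ⟨(u, w), rfl⟩))
    (hL.dissipation_nonneg (fun i ↦ (hξ i).le) hξL c)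

end IsGraphLaplacian

end Laplacian

section FilippovSolution

open scoped Matrix

variable {ι : Type*} [Fintype ι] {L : Matrix ι ι ℝ} {g : ℝ → ℝ} {x0 : ι → ℝ} {x γ : ℝ → ι → ℝ}
  {ξ : ι → ℝ} {m T : ℝ}

/-- `x` is a Filippov solution on `[0, ∞)` of the protocol `ẋ = -L g(x)` with initial value `x0`,
and `γ` is the selection of `K[g]` along `x` that drives it. The equation is imposed in integrated
form, and only nonnegative times are constrained. -/
structure IsFilippovSolution (L : Matrix ι ι ℝ) (g : ℝ → ℝ) (x0 : ι → ℝ) (x γ : ℝ → ι → ℝ) :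
    Prop where
  locallyIntegrableOn : LocallyIntegrableOn γ (Set.Ici 0)
  ae_mem_filippovMap : ∀ᵐ t, 0 ≤ t → ∀ i, γ t i ∈ filippovMap g (x t i)
  eq_sub_integral : ∀ t, 0 ≤ t → ∀ i, x t i = x0 i - ∫ s in (0 : ℝ)..t, (L *ᵥ γ s) i

namespace IsFilippovSolution

lemma intervalIntegrable_mulVec (h : IsFilippovSolution L g x0 x γ) (hT : 0 ≤ T) (i : ι) :
    IntervalIntegrable (fun s ↦ (L *ᵥ γ s) i) volume 0 T := by
  have hγ : IntegrableOn γ (Set.Icc 0 T) :=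
    h.locallyIntegrableOn.integrableOn_compact_subset Set.Icc_subset_Ici_self isCompact_Icc
  rw [intervalIntegrable_iff_integrableOn_Icc_of_le hT]
  exact integrable_finsetSum _ fun j _ ↦ (Integrable.eval hγ j).const_mul (L i j)

lemma absolutelyContinuousOnInterval (h : IsFilippovSolution L g x0 x γ) (hT : 0 ≤ T) (i : ι) :
    AbsolutelyContinuousOnInterval (fun t ↦ x t i) 0 T := by
  have hint := (h.intervalIntegrable_mulVec hT i).absolutelyContinuousOnInterval_intervalIntegral
    Set.left_mem_uIcc
  refine absolutelyContinuousOnInterval_of_dist_le_mul (K := 1) hint fun u hu v hv ↦ ?_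
  rw [Set.uIcc_of_le hT] at hu hv
  rw [h.eq_sub_integral u hu.1 i, h.eq_sub_integral v hv.1 i, dist_sub_left, one_mul]

lemma ae_hasDerivAt (h : IsFilippovSolution L g x0 x γ) (hT : 0 ≤ T) (i : ι) :
    ∀ᵐ t, t ∈ Set.Ioo 0 T → HasDerivAt (fun s ↦ x s i) (-(L *ᵥ γ t) i) t := by
  filter_upwards [(h.intervalIntegrable_mulVec hT i).ae_hasDerivAt_integral] with t ht htT
  have hmem : t ∈ Set.uIcc 0 T := Set.mem_uIcc_of_le htT.1.le htT.2.le
  refine ((ht hmem 0 Set.left_mem_uIcc).const_sub (x0 i)).congr_of_eventuallyEq ?_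
  filter_upwards [Ioi_mem_nhds htT.1] with s hs using h.eq_sub_integral s (le_of_lt hs) i

lemma dotProduct_eq (h : IsFilippovSolution L g x0 x γ) (hξL : ξ ᵥ* L = 0) {t : ℝ} (ht : 0 ≤ t) :
    ξ ⬝ᵥ x t = ξ ⬝ᵥ x0 := by
  have hzero : ∑ i, ξ i * ∫ s in (0 : ℝ)..t, (L *ᵥ γ s) i = 0 := by
    have hflux (s : ℝ) : ∑ i, ξ i * (L *ᵥ γ s) i = 0 := by
      change ξ ⬝ᵥ L *ᵥ γ s = 0
      rw [Matrix.dotProduct_mulVec, hξL, zero_dotProduct]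
    simp only [← intervalIntegral.integral_const_mul]
    rw [← intervalIntegral.integral_finsetSum
      fun i _ ↦ (h.intervalIntegrable_mulVec ht i).const_mul (ξ i)]
    simp only [hflux, intervalIntegral.integral_zero]
  simp only [dotProduct, h.eq_sub_integral t ht, mul_sub, Finset.sum_sub_distrib, hzero, sub_zero]

lemma sum_mul_sub_eq_zero (h : IsFilippovSolution L g x0 x γ) (hξ1 : ∑ i, ξ i = 1)
    (hξL : ξ ᵥ* L = 0) {t : ℝ} (ht : 0 ≤ t) : ∑ i, ξ i * (x t i - ξ ⬝ᵥ x0) = 0 := by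
  rw [← h.dotProduct_eq hξL ht]
  simp only [mul_sub, Finset.sum_sub_distrib, ← Finset.sum_mul, hξ1, one_mul]
  exact sub_self _

lemma absolutelyContinuousOnInterval_lyapunov (h : IsFilippovSolution L g x0 x γ)
    (hg : Monotone g) (hT : 0 ≤ T) :
    AbsolutelyContinuousOnInterval (fun t ↦ lyapunov ξ g m (x t)) 0 T := by
  have hsum := absolutelyContinuousOnInterval_finsetSum Finset.univ fun i _ ↦
    (absolutelyContinuousOnInterval_integral_comp hg m
      (h.absolutelyContinuousOnInterval hT i)).const_mul (ξ i)
  convert! hsum using 1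
  ext t
  simp only [lyapunov, Finset.sum_apply]

lemma ae_hasDerivAt_lyapunov (h : IsFilippovSolution L g x0 x γ) (hg : Monotone g) (hT : 0 ≤ T) :
    ∀ᵐ t, t ∈ Set.Ioo 0 T →
      HasDerivAt (fun s ↦ lyapunov ξ g m (x s)) (-dissipation L ξ (γ t)) t := by
  have hdiff : ∀ᵐ t, ∀ i, t ∈ Set.uIcc 0 T →
      DifferentiableAt ℝ (fun s ↦ ∫ r in m..x s i, g r) t := ae_all_iff.2 fun i ↦
    (absolutelyContinuousOnInterval_integral_comp hg m
      (h.absolutelyContinuousOnInterval hT i)).ae_differentiableAt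
  filter_upwards [hdiff, ae_all_iff.2 (h.ae_hasDerivAt hT), h.ae_mem_filippovMap]
    with t hdifft hxt hγt htT
  have hmem : t ∈ Set.uIcc 0 T := Set.mem_uIcc_of_le htT.1.le htT.2.le
  have hterm (i : ι) :
      HasDerivAt (fun s ↦ ∫ r in m..x s i, g r) (γ t i * -(L *ᵥ γ t) i) t := by
    refine hasDerivAt_comp_of_forall_mul_sub_le (G := fun z ↦ ∫ r in m..z, g r) (hxt i htT)
      (hdifft i hmem) fun y ↦ ?_
    rw [intervalIntegral.integral_interval_sub_left hg.intervalIntegrable hg.intervalIntegrable]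
    exact mul_sub_le_integral_of_mem_filippovMap hg (hγt htT.1.le i) y
  have hsum := HasDerivAt.fun_sum (u := Finset.univ) fun i _ ↦ (hterm i).const_mul (ξ i)
  simpa only [lyapunov, dissipation, mul_neg, Finset.sum_neg_distrib] using hsum

lemma ae_jump_sq_div_le_dissipation (h : IsFilippovSolution L g x0 x γ) (hg : Monotone g)
    (hξ : ∀ i, 0 < ξ i) (hmean : ∀ t, 0 ≤ t → ∑ i, ξ i * (x t i - m) = 0) {C : ℝ} (hC : 0 < C)
    (hdiss : ∀ (u w : ι) (c : ι → ℝ), (c u - c w) ^ 2 ≤ C * dissipation L ξ c) :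
    ∀ᵐ t, 0 ≤ t → (∃ i, x t i ≠ m) →
      (rightLim g m - leftLim g m) ^ 2 / C ≤ dissipation L ξ (γ t) := by
  filter_upwards [h.ae_mem_filippovMap] with t hγt ht hne
  obtain ⟨i, j, hij⟩ := exists_jump_le_sub_of_mem_filippovMap hg hξ (hmean t ht) hne (hγt ht)
  rw [div_le_iff₀' hC]
  exact (pow_le_pow_left₀ (sub_nonneg.2 (hg.leftLim_le_rightLim le_rfl)) hij 2).trans
    (hdiss i j (γ t))

end IsFilippovSolution

theorem finite_time_consensus_of_discontinuity_general (hL : IsGraphLaplacian L)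
    (hconn : ∀ u w, Relation.ReflTransGen (LaplacianEdge L) u w)
    (hξpos : ∀ i, 0 < ξ i) (hξ1 : ∑ i, ξ i = 1) (hξL : ξ ᵥ* L = 0) (hg : Monotone g)
    (hdisc : leftLim g (ξ ⬝ᵥ x0) < rightLim g (ξ ⬝ᵥ x0)) (h : IsFilippovSolution L g x0 x γ) :
    ∃ T : ℝ, 0 ≤ T ∧ ∀ t, T ≤ t → ∀ i, x t i = ξ ⬝ᵥ x0 := by
  obtain ⟨C, hC, hdiss⟩ := hL.exists_forall_sq_sub_le_mul_dissipation hξpos hξL hconn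
  set m := ξ ⬝ᵥ x0
  have hmean (t : ℝ) (ht : 0 ≤ t) : ∑ i, ξ i * (x t i - m) = 0 := h.sum_mul_sub_eq_zero hξ1 hξL ht
  have hV0 (t : ℝ) (ht : 0 ≤ t) : 0 ≤ lyapunov ξ g m (x t) :=
    lyapunov_nonneg hg (fun i ↦ (hξpos i).le) (hmean t ht)
  have hViff (t : ℝ) (ht : 0 ≤ t) : lyapunov ξ g m (x t) = 0 ↔ ∀ i, x t i = m :=
    lyapunov_eq_zero_iff hg hdisc hξpos (hmean t ht)
  set k := (rightLim g m - leftLim g m) ^ 2 / C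
  have hk : 0 < k := div_pos (pow_pos (sub_pos.2 hdisc) 2) hC
  have hT : 0 ≤ lyapunov ξ g m (x 0) / k := div_nonneg (hV0 0 le_rfl) hk.le
  refine ⟨lyapunov ξ g m (x 0) / k, hT, fun t hTt ↦ (hViff t (hT.trans hTt)).1 ?_⟩
  refine eq_zero_of_deriv_le_neg_of_pos hk.le (hT.trans hTt)
    (h.absolutelyContinuousOnInterval_lyapunov hg (hT.trans hTt)) (fun s hs ↦ hV0 s hs.1) ?_
    ((div_le_iff₀' hk).1 hTt)
  filter_upwards [h.ae_hasDerivAt_lyapunov hg (hT.trans hTt),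
    h.ae_jump_sq_div_le_dissipation hg hξpos hmean hC hdiss] with s hderiv hrate hs hpos
  rw [(hderiv hs).deriv]
  exact neg_le_neg (hrate hs.1.le (not_forall.1 (mt (hViff s hs.1.le).2 hpos.ne')))

end FilippovSolution

/-- finite-time convergence part of Theorem 1: If `G(L)` is strongly
connected, `ξ` is a normalized positive left null vector of `L`, `g` is strictly
increasing with only finitely many discontinuity points in every bounded interval,
and `g` is discontinuous at `x̄ = ∑ i, ξ i * x0 i`, then every Filippov solution with
initial value `x0` reaches consensus at `x̄` in finite time. -/
theorem finite_time_consensus_of_discontinuity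
    (n : ℕ) (L : Matrix (Fin n) (Fin n) ℝ)
    (hL1 : ∀ i j, i ≠ j → L i j ≤ 0) (hL2 : ∀ i, ∑ j, L i j = 0)
    (hsc : ∀ u w : Fin n,
      Relation.ReflTransGen (fun a b => a ≠ b ∧ L b a < 0) u w)
    (ξ : Fin n → ℝ) (hξpos : ∀ i, 0 < ξ i) (hξ1 : ∑ i, ξ i = 1)
    (hξ : ∀ j, ∑ i, ξ i * L i j = 0)
    (g : ℝ → ℝ) (hg : StrictMono g)
    (hgfin : ∀ a b : ℝ, {z : ℝ | z ∈ Set.Icc a b ∧ ¬ ContinuousAt g z}.Finite)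
    (x0 : Fin n → ℝ)
    (hdisc : leftLim g (∑ i, ξ i * x0 i) < rightLim g (∑ i, ξ i * x0 i))
    (x γ : ℝ → Fin n → ℝ)
    (hxcont : Continuous x) (hγmeas : Measurable γ)
    (hγint : LocallyIntegrable γ volume)
    (hγK : ∀ᵐ t ∂volume, 0 ≤ t →
      ∀ j, γ t j ∈ Set.Icc (leftLim g (x t j)) (rightLim g (x t j)))
    (hsol : ∀ t, 0 ≤ t → ∀ i,
      x t i = x0 i - ∫ s in (0:ℝ)..t, ∑ j, L i j * γ s j) :
    ∃ T : ℝ, 0 ≤ T ∧ ∀ t, T ≤ t → ∀ i, x t i = ∑ i, ξ i * x0 i := by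
  exact finite_time_consensus_of_discontinuity_general ⟨hL1, hL2⟩ hsc hξpos hξ1 (funext hξ)
    hg.monotone hdisc ⟨hγint.locallyIntegrableOn _, hγK, hsol⟩
end
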